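/- Let m > n ≥ 2, let f : ℝ^m → (0,∞) be smooth, and let φ = (φ¹,…,φⁿ) : ℝ^m → ℝ^n be a map each of whose components is a polynomial. Then φ is an f-harmonic morphism (for every harmonic function u : V → ℝ on an open V ⊆ ℝ^n with φ⁻¹(V) nonempty, u∘φ is f-harmonic on φ⁻¹(V)) if and only if φ is a harmonic morphism (for every harmonic u : V → ℝ on an open V ⊆ ℝ^n, u∘φ is harmonic on φ⁻¹(V)) and the gradient of f is vertical, i.e., Dφ_x(∇f(x)) = 0 for every x ∈ ℝ^m. -/

import Mathlib

open scoped RealInnerProductSpace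

/-- The Euclidean Laplacian of a real-valued function on `ℝ^m`. -/
noncomputable def lap {m : ℕ} (u : EuclideanSpace ℝ (Fin m) → ℝ)
    (x : EuclideanSpace ℝ (Fin m)) : ℝ :=
  ∑ i : Fin m, fderiv ℝ (fun y => fderiv ℝ u y (EuclideanSpace.single i 1)) x
    (EuclideanSpace.single i 1)

/-!
Testing `φ` on the linear functions `⟨v, ·⟩` and on the quadratic harmonic functions
`⟨v, ·⟩⟨w, ·⟩` with `v ⊥ w` shows, by the chain rule for the Laplacian, that `φ` is an `f`-harmonic
morphism iff it is horizontally weakly conformal and its tension field `f Δφ + dφ(∇f)` vanishes;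
the case `f = 1` characterises harmonic morphisms. It remains to see that horizontal weak
conformality already forces `Δφ = 0` when the components of `φ` are polynomials.

Two distinct components `p`, `q` have orthogonal gradients of equal length, so the complex
polynomial `P = p + iq` solves the eikonal equation `∑ (∂ᵢP)² = 0`. Let `D = ∑ ∂ᵢP ∂ᵢ`.
Differentiating the eikonal equation once gives `D (∂ⱼP) = 0`, so `D² xⱼ = 0` and `D` is locally
nilpotent; differentiating it twice gives the Riccati equation `D H = -H²` for the Hessian `H` of
`P`. Hence `D^N H = ± N! H^(N+1)`, so `H` is nilpotent and its trace `ΔP` vanishes.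
-/

open Filter MvPolynomial InnerProductSpace Laplacian Topology

section Derivation

variable {R A : Type*} [CommRing R] [CommRing A] [Algebra R A] (D : Derivation R A A)

theorem iterate_derivation_mul_eq_zero {N M : ℕ} {a b : A} (ha : D^[N] a = 0)
    (hb : D^[M] b = 0) : D^[N + M] (a * b) = 0 := by
  induction hk : N + M generalizing N M a b with
  | zero =>
    obtain ⟨rfl, rfl⟩ : N = 0 ∧ M = 0 := by omega
    simp_all
  | succ k ih =>
    rw [Function.iterate_succ_apply, D.leibniz, iterate_map_add, smul_eq_mul, smul_eq_mul]
    have left : D^[k] (a * D b) = 0 := by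
      cases M with
      | zero => simp_all
      | succ M => exact ih ha hb (by omega)
    have right : D^[k] (b * D a) = 0 := by
      cases N with
      | zero => simp_all
      | succ N => exact ih hb ha (by omega)
    rw [left, right, add_zero]

/-- The subalgebra on which a derivation `D` is locally nilpotent: its elements are those killed by
all sufficiently high iterates of `D`. -/
def locallyNilpotentSubalgebra : Subalgebra R A where
  carrier := {a | ∀ᶠ N in atTop, D^[N] a = 0}
  add_mem' ha hb := by
    filter_upwards [ha, hb] with N haN hbN
    rw [iterate_map_add, haN, hbN, add_zero]
  mul_mem' ha hb := by
    obtain ⟨N, hN⟩ := ha.exists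
    obtain ⟨M, hM⟩ := eventually_atTop.1 hb
    filter_upwards [eventually_ge_atTop (N + M)] with k hk
    obtain ⟨l, rfl⟩ := Nat.exists_eq_add_of_le hk
    rw [add_assoc]
    exact iterate_derivation_mul_eq_zero D hN (hM _ (Nat.le_add_right M l))
  algebraMap_mem' r := by
    filter_upwards [eventually_ge_atTop 1] with N hN
    obtain ⟨k, rfl⟩ := Nat.exists_eq_add_of_le' hN
    rw [Function.iterate_succ_apply, D.map_algebraMap, iterate_map_zero]

theorem mem_locallyNilpotentSubalgebra_of_iterate_eq_zero {a : A} {N : ℕ} (h : D^[N] a = 0) :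
    a ∈ locallyNilpotentSubalgebra D := by
  filter_upwards [eventually_ge_atTop N] with k hk
  obtain ⟨l, rfl⟩ := Nat.exists_eq_add_of_le' hk
  rw [Function.iterate_add_apply, h, iterate_map_zero]

theorem locallyNilpotentSubalgebra_eq_top_of_forall_X {σ : Type*}
    (D : Derivation R (MvPolynomial σ R) (MvPolynomial σ R))
    (h : ∀ i, X i ∈ locallyNilpotentSubalgebra D) : locallyNilpotentSubalgebra D = ⊤ := by
  rw [eq_top_iff, ← MvPolynomial.adjoin_range_X, Algebra.adjoin_le_iff]
  exact Set.range_subset_iff.2 h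

variable {ι : Type*} [Fintype ι]

theorem map_derivation_matrix_mul (M N : Matrix ι ι A) :
    (M * N).map D = M.map D * N + M * N.map D := by
  ext i j
  simp only [Matrix.map_apply, Matrix.mul_apply, Matrix.add_apply, map_sum, D.leibniz, smul_eq_mul,
    Finset.sum_add_distrib]
  rw [add_comm]
  simp only [mul_comm]

variable {D} [DecidableEq ι] {H : Matrix ι ι A}

theorem map_derivation_pow_of_riccati (hH : H.map D = -H ^ 2) (r : ℕ) :
    (H ^ r).map D = -(r • H ^ (r + 1)) := by
  induction r with
  | zero => ext i j; by_cases h : i = j <;> simp [h]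
  | succ r ih =>
    rw [pow_succ, map_derivation_matrix_mul, ih, hH]
    simp only [neg_mul, mul_neg, smul_mul_assoc, ← pow_succ, ← pow_add]
    rw [add_smul, one_smul, neg_add]

theorem map_iterate_derivation_of_riccati (hH : H.map D = -H ^ 2) (r : ℕ) :
    H.map D^[r] = ((-1) ^ r * r.factorial : ℤ) • H ^ (r + 1) := by
  induction r with
  | zero => simp
  | succ r ih =>
    calc H.map D^[r + 1] = (H.map D^[r]).map D := by
          rw [Matrix.map_map, Function.iterate_succ']
      _ = ((-1) ^ r * r.factorial : ℤ) • (H ^ (r + 1)).map D := by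
          rw [ih]; ext i j; simp only [Matrix.map_apply, Matrix.smul_apply, map_zsmul]
      _ = ((-1) ^ (r + 1) * (r + 1).factorial : ℤ) • H ^ (r + 1 + 1) := by
          rw [map_derivation_pow_of_riccati hH, smul_neg, ← natCast_zsmul, smul_smul, ← neg_smul]
          congr 1
          push_cast [Nat.factorial_succ]
          ring

theorem isNilpotent_of_riccati [IsAddTorsionFree A] (hH : H.map D = -H ^ 2)
    (hD : ∀ i j, H i j ∈ locallyNilpotentSubalgebra D) : IsNilpotent H := by
  obtain ⟨N, hN⟩ := (eventually_all.2 fun i => eventually_all.2 (hD i)).exists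
  refine ⟨N + 1, ?_⟩
  ext i j
  have h : ((-1) ^ N * N.factorial : ℤ) • (H ^ (N + 1)) i j = 0 := by
    rw [← Matrix.smul_apply, ← map_iterate_derivation_of_riccati hH]
    exact hN i j
  exact (smul_eq_zero.1 h).resolve_left (by simp [Nat.factorial_ne_zero])

end Derivation

section Eikonal

variable {σ R : Type*} [CommRing R]

theorem pderiv_comm (i j : σ) (p : MvPolynomial σ R) :
    pderiv i (pderiv j p) = pderiv j (pderiv i p) := by
  classical
  let D (k : σ) : Derivation R (MvPolynomial σ R) (MvPolynomial σ R) := pderiv k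
  have h : ⁅D i, D j⁆ = 0 := by
    ext k
    simp [D, Derivation.commutator_apply, pderiv_X, Pi.single_apply, apply_ite]
  rw [← sub_eq_zero]
  exact Derivation.congr_fun h p

variable [Fintype σ]

/-- The Laplacian `∑ ∂ᵢ²` on polynomials. -/
noncomputable def polyLaplacian : MvPolynomial σ R →ₗ[R] MvPolynomial σ R :=
  ∑ i, (pderiv i).toLinearMap ∘ₗ (pderiv i).toLinearMap

theorem polyLaplacian_apply (p : MvPolynomial σ R) :
    polyLaplacian p = ∑ i, pderiv i (pderiv i p) := by
  simp [polyLaplacian]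

/-- The derivation `q ↦ ⟨∇p, ∇q⟩ = ∑ ∂ᵢp ∂ᵢq` along the gradient of the polynomial `p`. -/
noncomputable def gradDerivation (p : MvPolynomial σ R) :
    Derivation R (MvPolynomial σ R) (MvPolynomial σ R) :=
  ∑ i, pderiv i p • pderiv i

theorem gradDerivation_apply (p q : MvPolynomial σ R) :
    gradDerivation p q = ∑ i, pderiv i p * pderiv i q := by
  have h := map_sum (Derivation.coeFnAddMonoidHom (R := R) (A := MvPolynomial σ R)
    (M := MvPolynomial σ R)) (fun i => pderiv i p • pderiv i) Finset.univ
  exact (congrFun h q).trans (Finset.sum_apply _ _ _)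

theorem gradDerivation_comm (p q : MvPolynomial σ R) :
    gradDerivation p q = gradDerivation q p := by
  simp only [gradDerivation_apply, mul_comm]

theorem gradDerivation_X (p : MvPolynomial σ R) (j : σ) :
    gradDerivation p (X j) = pderiv j p := by
  classical simp [gradDerivation_apply, pderiv_X, Pi.single_apply]

theorem pderiv_gradDerivation (j : σ) (p q : MvPolynomial σ R) :
    pderiv j (gradDerivation p q) =
      gradDerivation (pderiv j p) q + gradDerivation p (pderiv j q) := by
  simp only [gradDerivation_apply, map_sum, Derivation.leibniz, smul_eq_mul, ←
    Finset.sum_add_distrib, pderiv_comm _ j]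
  exact Finset.sum_congr rfl fun i _ => by ring

variable [IsDomain R] [CharZero R] {P : MvPolynomial σ R}

theorem gradDerivation_pderiv_of_eikonal (hP : gradDerivation P P = 0) (j : σ) :
    gradDerivation P (pderiv j P) = 0 := by
  have h := pderiv_gradDerivation j P P
  rw [hP, map_zero, gradDerivation_comm (pderiv j P), ← two_mul] at h
  exact (mul_eq_zero.1 h.symm).resolve_left two_ne_zero

theorem locallyNilpotentSubalgebra_gradDerivation_of_eikonal (hP : gradDerivation P P = 0) :
    locallyNilpotentSubalgebra (gradDerivation P) = ⊤ := by
  refine locallyNilpotentSubalgebra_eq_top_of_forall_X _ fun j =>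
    mem_locallyNilpotentSubalgebra_of_iterate_eq_zero (N := 2) _ ?_
  simp only [Function.iterate_succ_apply, Function.iterate_zero_apply, gradDerivation_X,
    gradDerivation_pderiv_of_eikonal hP]

/-- The Hessian matrix `(∂ᵢ∂ⱼp)` of a polynomial. -/
noncomputable def polyHessian (p : MvPolynomial σ R) : Matrix σ σ (MvPolynomial σ R) :=
  Matrix.of fun i j => pderiv i (pderiv j p)

theorem polyHessian_riccati_of_eikonal [DecidableEq σ] (hP : gradDerivation P P = 0) :
    (polyHessian P).map (gradDerivation P) = -polyHessian P ^ 2 := by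
  ext1 i j
  have h := pderiv_gradDerivation i P (pderiv j P)
  rw [gradDerivation_pderiv_of_eikonal hP, map_zero] at h
  rw [Matrix.map_apply, Matrix.neg_apply, pow_two, Matrix.mul_apply]
  simp only [polyHessian, Matrix.of_apply]
  rw [eq_neg_of_add_eq_zero_right h.symm, gradDerivation_apply]
  simp only [pderiv_comm i]

theorem polyLaplacian_eq_zero_of_eikonal (hP : gradDerivation P P = 0) : polyLaplacian P = 0 := by
  classical
  have nilpotent : IsNilpotent (polyHessian P) :=
    isNilpotent_of_riccati (polyHessian_riccati_of_eikonal hP) fun i j => by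
      simp [locallyNilpotentSubalgebra_gradDerivation_of_eikonal hP]
  rw [polyLaplacian_apply]
  exact (Matrix.isNilpotent_trace_of_isNilpotent nilpotent).eq_zero

-- Semiconformality of `(p, q)` is the eikonal equation for the complex polynomial `p + iq`.
theorem polyLaplacian_eq_zero_of_semiconformal {p q : MvPolynomial σ ℝ}
    (horth : gradDerivation p q = 0) (hnorm : gradDerivation p p = gradDerivation q q) :
    polyLaplacian p = 0 := by
  let toComplex : MvPolynomial σ ℝ →+* MvPolynomial σ ℂ := map Complex.ofRealHom
  have map_grad (a b : MvPolynomial σ ℝ) :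
      gradDerivation (toComplex a) (toComplex b) = toComplex (gradDerivation a b) := by
    simp only [toComplex, gradDerivation_apply, pderiv_map, map_sum, map_mul]
  have map_lap (a : MvPolynomial σ ℝ) :
      polyLaplacian (toComplex a) = toComplex (polyLaplacian a) := by
    simp only [toComplex, polyLaplacian_apply, pderiv_map, map_sum]
  have eikonal : gradDerivation (toComplex p + Complex.I • toComplex q)
      (toComplex p + Complex.I • toComplex q) = 0 := by
    rw [map_add, Derivation.map_smul, gradDerivation_comm _ (toComplex p),
      gradDerivation_comm _ (toComplex q)]
    simp only [map_add, Derivation.map_smul, map_grad, gradDerivation_comm q p, horth, hnorm,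
      map_zero, smul_zero, add_zero, zero_add, smul_smul, Complex.I_mul_I, neg_smul, one_smul,
      add_neg_cancel]
  have h := polyLaplacian_eq_zero_of_eikonal eikonal
  rw [map_add, map_smul, map_lap, map_lap] at h
  ext d
  simpa [toComplex, coeff_map] using congrArg (fun r => (coeff d r).re) h

end Eikonal

section SecondDerivative

variable {E F G : Type*} [NormedAddCommGroup E] [NormedSpace ℝ E] [NormedAddCommGroup F]
  [NormedSpace ℝ F] [NormedAddCommGroup G] [NormedSpace ℝ G]

theorem differentiableAt_fderiv_of_contDiffAt {u : E → G} {x : E} (hu : ContDiffAt ℝ 2 u x) :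
    DifferentiableAt ℝ (fderiv ℝ u) x :=
  (hu.fderiv_right (m := 1) (by norm_num)).differentiableAt one_ne_zero

theorem fderiv_fderiv_apply_const {u : E → G} {x : E} (hu : ContDiffAt ℝ 2 u x) (v w : E) :
    fderiv ℝ (fun y => fderiv ℝ u y v) x w = fderiv ℝ (fderiv ℝ u) x w v := by
  rw [fderiv_clm_apply (differentiableAt_fderiv_of_contDiffAt hu) (differentiableAt_const v)]
  simp

theorem fderiv_fderiv_comp {u : F → G} {φ : E → F} {x : E} (hu : ContDiffAt ℝ 2 u (φ x))
    (hφ : ContDiffAt ℝ 2 φ x) (v w : E) :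
    fderiv ℝ (fderiv ℝ (u ∘ φ)) x v w =
      fderiv ℝ (fderiv ℝ u) (φ x) (fderiv ℝ φ x v) (fderiv ℝ φ x w) +
        fderiv ℝ u (φ x) (fderiv ℝ (fderiv ℝ φ) x v w) := by
  have first : fderiv ℝ (u ∘ φ) =ᶠ[𝓝 x] fun y => (fderiv ℝ u (φ y)).comp (fderiv ℝ φ y) := by
    filter_upwards [hφ.eventually (by simp),
      hφ.continuousAt.eventually (hu.eventually (by simp))] with y hφy huy
    exact fderiv_comp y (huy.differentiableAt two_ne_zero) (hφy.differentiableAt two_ne_zero)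
  have outer : HasFDerivAt (fun y => fderiv ℝ u (φ y)) _ x :=
    (differentiableAt_fderiv_of_contDiffAt hu).hasFDerivAt.comp x
      (hφ.differentiableAt two_ne_zero).hasFDerivAt
  have inner := (differentiableAt_fderiv_of_contDiffAt hφ).hasFDerivAt
  rw [first.fderiv_eq, (outer.clm_comp inner).fderiv]
  simp [add_comm]

end SecondDerivative

section InnerProductSpace

variable {E F G ι κ : Type*} [NormedAddCommGroup E] [InnerProductSpace ℝ E]
  [NormedAddCommGroup F] [InnerProductSpace ℝ F] [NormedAddCommGroup G] [NormedSpace ℝ G]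

theorem fderiv_fderiv_inner_mul_inner (v w y a b : F) :
    fderiv ℝ (fderiv ℝ fun z => ⟪v, z⟫ * ⟪w, z⟫) y a b = ⟪v, a⟫ * ⟪w, b⟫ + ⟪w, a⟫ * ⟪v, b⟫ := by
  have first : fderiv ℝ (fun z => ⟪v, z⟫ * ⟪w, z⟫) =
      fun z => innerSL ℝ v z • innerSL ℝ w + innerSL ℝ w z • innerSL ℝ v := by
    ext1 z
    exact ((innerSL ℝ v).hasFDerivAt.mul (innerSL ℝ w).hasFDerivAt).fderiv
  have second := ((innerSL ℝ v).hasFDerivAt.smul_const (innerSL ℝ w)).fun_add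
    ((innerSL ℝ w).hasFDerivAt.smul_const (innerSL ℝ v)) (x := y)
  rw [first, second.fderiv]
  simp

theorem contDiff_inner_mul_inner {k : WithTop ℕ∞} (v w : F) :
    ContDiff ℝ k fun y => ⟪v, y⟫ * ⟪w, y⟫ :=
  (innerSL ℝ v).contDiff.mul (innerSL ℝ w).contDiff

variable [FiniteDimensional ℝ F]

theorem exists_forall_inner_map_eq_mul_inner {A : F →ₗ[ℝ] E}
    (hA : ∀ v w, ⟪v, w⟫ = 0 → ⟪A v, A w⟫ = 0) : ∃ c : ℝ, ∀ v w, ⟪A v, A w⟫ = c * ⟪v, w⟫ := by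
  let e := stdOrthonormalBasis ℝ F
  have norm_eq (i j) : ‖A (e i)‖ = ‖A (e j)‖ := by
    have h := hA (e i + e j) (e i - e j) ((real_inner_add_sub_eq_zero_iff _ _).2 (by simp))
    rwa [map_add, map_sub, real_inner_add_sub_eq_zero_iff] at h
  obtain ⟨c, hc⟩ : ∃ c, ∀ i, ‖A (e i)‖ = c := by
    rcases isEmpty_or_nonempty (Fin (Module.finrank ℝ F)) with _ | ⟨⟨i⟩⟩
    · exact ⟨0, isEmptyElim⟩
    · exact ⟨_, fun j => norm_eq j i⟩
  have forms_eq : (innerₗ E).compl₁₂ A A = c ^ 2 • innerₗ F :=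
    LinearMap.ext_basis e.toBasis e.toBasis fun i j => by
      rcases eq_or_ne i j with rfl | hij
      · simp [hc]
      · simp [hA _ _ (e.orthonormal.inner_eq_zero hij), e.orthonormal.inner_eq_zero hij]
  exact ⟨c ^ 2, fun v w => LinearMap.congr_fun₂ forms_eq v w⟩

theorem sum_apply_map_map_eq_smul_sum [FiniteDimensional ℝ E] [Fintype ι] [Fintype κ]
    (b : OrthonormalBasis ι ℝ E) (e : OrthonormalBasis κ ℝ F) {L : E →ₗ[ℝ] F} {c : ℝ}
    (hL : ∀ v w, ⟪L.adjoint v, L.adjoint w⟫ = c * ⟪v, w⟫) (B : F →L[ℝ] F →L[ℝ] G) :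
    ∑ i, B (L (b i)) (L (b i)) = c • ∑ k, B (e k) (e k) := by
  classical
  have expand (i) : B (L (b i)) (L (b i)) =
      ∑ k, ∑ l, (⟪L.adjoint (e k), b i⟫ * ⟪b i, L.adjoint (e l)⟫) • B (e k) (e l) := by
    conv_lhs => rw [← e.sum_repr' (L (b i))]
    simp only [map_sum, map_smul, sum_apply, smul_apply, Finset.smul_sum, smul_smul,
      LinearMap.adjoint_inner_left, LinearMap.adjoint_inner_right, real_inner_comm (e _) (L _)]
    rw [Finset.sum_comm]
    simp only [mul_comm]
  calc ∑ i, B (L (b i)) (L (b i))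
      = ∑ k, ∑ l, (∑ i, ⟪L.adjoint (e k), b i⟫ * ⟪b i, L.adjoint (e l)⟫) • B (e k) (e l) := by
        simp only [expand, Finset.sum_smul]
        rw [Finset.sum_comm]
        exact Finset.sum_congr rfl fun k _ => Finset.sum_comm
    _ = c • ∑ k, B (e k) (e k) := by
        simp [b.sum_inner_mul_inner, hL, orthonormal_iff_ite.1 e.orthonormal, Finset.smul_sum]

end InnerProductSpace

section Laplacian

variable {E F G ι : Type*} [NormedAddCommGroup E] [InnerProductSpace ℝ E]
  [FiniteDimensional ℝ E] [NormedAddCommGroup F] [NormedSpace ℝ F] [NormedAddCommGroup G]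
  [NormedSpace ℝ G] [Fintype ι]

theorem laplacian_eq_sum_fderiv_fderiv (b : OrthonormalBasis ι ℝ E) (u : E → G) (x : E) :
    Δ u x = ∑ i, fderiv ℝ (fderiv ℝ u) x (b i) (b i) := by
  simp [laplacian_eq_iteratedFDeriv_orthonormalBasis u b, iteratedFDeriv_two_apply]

theorem harmonicOnNhd_continuousLinearMap (L : E →L[ℝ] G) (s : Set E) : HarmonicOnNhd L s := by
  refine fun y _ => ⟨L.contDiff.contDiffAt, Eventually.of_forall fun z => ?_⟩
  have first : fderiv ℝ L = fun _ => L := by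
    ext1 z
    exact L.fderiv
  simp [laplacian_eq_sum_fderiv_fderiv (stdOrthonormalBasis ℝ E), first]

theorem harmonicOnNhd_inner_mul_inner {v w : E} (h : ⟪v, w⟫ = 0) (s : Set E) :
    HarmonicOnNhd (fun y => ⟪v, y⟫ * ⟪w, y⟫) s := by
  refine fun y _ => ⟨(contDiff_inner_mul_inner v w).contDiffAt, Eventually.of_forall fun z => ?_⟩
  let e := stdOrthonormalBasis ℝ E
  calc Δ (fun y => ⟪v, y⟫ * ⟪w, y⟫) z
      = ∑ i, ⟪v, e i⟫ * ⟪e i, w⟫ + ∑ i, ⟪w, e i⟫ * ⟪e i, v⟫ := by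
        simp only [laplacian_eq_sum_fderiv_fderiv e, fderiv_fderiv_inner_mul_inner,
          Finset.sum_add_distrib, real_inner_comm (e _)]
    _ = 0 := by
        rw [e.sum_inner_mul_inner, e.sum_inner_mul_inner, real_inner_comm v w, h, add_zero]

/-- The second-order operator `u ↦ f Δu + du(X)`. With `X = ∇f` its zeros on scalar functions are
the `f`-harmonic functions, and its value on a map is the `f`-tension field. -/
noncomputable def driftLaplacian (f : E → ℝ) (X : E → E) (u : E → G) (x : E) : G :=
  f x • Δ u x + fderiv ℝ u x (X x)

theorem driftLaplacian_one_zero (u : E → G) : driftLaplacian 1 0 u = Δ u := by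
  ext x
  simp [driftLaplacian]

theorem driftLaplacian_comp {f : E → ℝ} {X : E → E} {φ : E → F} {x : E}
    (b : OrthonormalBasis ι ℝ E) {u : F → G} (hu : ContDiffAt ℝ 2 u (φ x))
    (hφ : ContDiffAt ℝ 2 φ x) :
    driftLaplacian f X (u ∘ φ) x =
      f x • ∑ i, fderiv ℝ (fderiv ℝ u) (φ x) (fderiv ℝ φ x (b i)) (fderiv ℝ φ x (b i)) +
        fderiv ℝ u (φ x) (driftLaplacian f X φ x) := by
  have laplacian_comp : Δ (u ∘ φ) x =
      ∑ i, fderiv ℝ (fderiv ℝ u) (φ x) (fderiv ℝ φ x (b i)) (fderiv ℝ φ x (b i)) +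
        fderiv ℝ u (φ x) (Δ φ x) := by
    simp only [laplacian_eq_sum_fderiv_fderiv b, fderiv_fderiv_comp hu hφ, Finset.sum_add_distrib,
      map_sum]
  rw [driftLaplacian, laplacian_comp,
    fderiv_comp x (hu.differentiableAt two_ne_zero) (hφ.differentiableAt two_ne_zero),
    driftLaplacian, map_add, map_smul, smul_add, add_assoc, ContinuousLinearMap.comp_apply]

theorem driftLaplacian_continuousLinearMap_comp {f : E → ℝ} {X : E → E} {φ : E → F} {x : E}
    (L : F →L[ℝ] G) (hφ : ContDiffAt ℝ 2 φ x) :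
    driftLaplacian f X (L ∘ φ) x = L (driftLaplacian f X φ x) := by
  have first : fderiv ℝ L = fun _ => L := by
    ext1 z
    exact L.fderiv
  rw [driftLaplacian_comp (stdOrthonormalBasis ℝ E) L.contDiff.contDiffAt hφ]
  simp [first]

end Laplacian

section HarmonicMorphism

variable {E F : Type*} [NormedAddCommGroup E] [InnerProductSpace ℝ E] [FiniteDimensional ℝ E]
  [NormedAddCommGroup F] [InnerProductSpace ℝ F] [FiniteDimensional ℝ F]

/-- Maps pulling local harmonic functions back to zeros of `u ↦ f Δu + du(X)`; for `X = ∇f` these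
are the `f`-harmonic morphisms. Meant for `φ` of class `C²`: the regularity of `u ∘ φ` is not part
of the condition. -/
def IsDriftHarmonicMorphism (f : E → ℝ) (X : E → E) (φ : E → F) : Prop :=
  ∀ V : Set F, IsOpen V → ∀ u : F → ℝ, HarmonicOnNhd u V →
    ∀ x ∈ φ ⁻¹' V, driftLaplacian f X (u ∘ φ) x = 0

/-- Harmonic morphisms: maps pulling local harmonic functions back to harmonic functions, again
meant for `φ` of class `C²`. -/
def IsHarmonicMorphism (φ : E → F) : Prop :=
  ∀ V : Set F, IsOpen V → ∀ u : F → ℝ, HarmonicOnNhd u V → ∀ x ∈ φ ⁻¹' V, Δ (u ∘ φ) x = 0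

/-- Horizontal weak conformality of `φ` at `x`: the differential vanishes or restricts to a
conformal isomorphism from the orthogonal complement of its kernel. It is encoded through the
adjoint, as `dφ ∘ dφ* = c • id`. -/
def IsHorizontallyWeaklyConformalAt (φ : E → F) (x : E) : Prop :=
  ∃ c : ℝ, ∀ v w, ⟪(fderiv ℝ φ x).toLinearMap.adjoint v, (fderiv ℝ φ x).toLinearMap.adjoint w⟫ =
    c * ⟪v, w⟫

variable {f : E → ℝ} {X : E → E} {φ : E → F} {x : E}

theorem isHarmonicMorphism_iff_isDriftHarmonicMorphism_one_zero :
    IsHarmonicMorphism φ ↔ IsDriftHarmonicMorphism 1 0 φ := by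
  simp only [IsHarmonicMorphism, IsDriftHarmonicMorphism, driftLaplacian_one_zero]

theorem IsHorizontallyWeaklyConformalAt.driftLaplacian_comp_eq_zero
    (h : IsHorizontallyWeaklyConformalAt φ x) (hφ : ContDiffAt ℝ 2 φ x)
    (tension : driftLaplacian f X φ x = 0) {u : F → ℝ} (hu : HarmonicAt u (φ x)) :
    driftLaplacian f X (u ∘ φ) x = 0 := by
  obtain ⟨c, hc⟩ := h
  have sum_eq_zero := sum_apply_map_map_eq_smul_sum (stdOrthonormalBasis ℝ E)
    (stdOrthonormalBasis ℝ F) hc (fderiv ℝ (fderiv ℝ u) (φ x))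
  rw [← laplacian_eq_sum_fderiv_fderiv, hu.2.self_of_nhds, Pi.zero_apply, smul_zero] at sum_eq_zero
  rw [driftLaplacian_comp (stdOrthonormalBasis ℝ E) hu.1 hφ, tension, map_zero, add_zero]
  exact smul_eq_zero_of_right _ sum_eq_zero

theorem IsDriftHarmonicMorphism.driftLaplacian_eq_zero (h : IsDriftHarmonicMorphism f X φ)
    (hφ : ContDiffAt ℝ 2 φ x) : driftLaplacian f X φ x = 0 := by
  refine ext_inner_left ℝ fun v => ?_
  rw [inner_zero_right, ← innerSL_apply_apply ℝ, ← driftLaplacian_continuousLinearMap_comp _ hφ]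
  exact h Set.univ isOpen_univ _ (harmonicOnNhd_continuousLinearMap _ _) x trivial

theorem IsDriftHarmonicMorphism.isHorizontallyWeaklyConformalAt
    (h : IsDriftHarmonicMorphism f X φ) (hf : f x ≠ 0) (hφ : ContDiffAt ℝ 2 φ x) :
    IsHorizontallyWeaklyConformalAt φ x := by
  refine exists_forall_inner_map_eq_mul_inner fun v w hvw => ?_
  let b := stdOrthonormalBasis ℝ E
  let L := (fderiv ℝ φ x).toLinearMap
  have pullback := h Set.univ isOpen_univ _ (harmonicOnNhd_inner_mul_inner hvw _) x trivial
  rw [driftLaplacian_comp b (contDiff_inner_mul_inner v w).contDiffAt hφ,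
    h.driftLaplacian_eq_zero hφ, map_zero, add_zero, smul_eq_zero_iff_right hf] at pullback
  have sum_eq : ∑ i, ⟪v, L (b i)⟫ * ⟪w, L (b i)⟫ = ⟪L.adjoint v, L.adjoint w⟫ := by
    rw [← b.sum_inner_mul_inner]
    simp only [LinearMap.adjoint_inner_left, LinearMap.adjoint_inner_right, real_inner_comm w]
  simp only [fderiv_fderiv_inner_mul_inner, mul_comm ⟪w, _⟫, ← two_mul, ← Finset.mul_sum]
    at pullback
  exact sum_eq.symm.trans ((mul_eq_zero.1 pullback).resolve_left two_ne_zero)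

theorem isDriftHarmonicMorphism_iff (hf : ∀ x, f x ≠ 0) (hφ : ContDiff ℝ 2 φ) :
    IsDriftHarmonicMorphism f X φ ↔
      (∀ x, IsHorizontallyWeaklyConformalAt φ x) ∧ ∀ x, driftLaplacian f X φ x = 0 :=
  ⟨fun h => ⟨fun x => h.isHorizontallyWeaklyConformalAt (hf x) hφ.contDiffAt,
    fun _ => h.driftLaplacian_eq_zero hφ.contDiffAt⟩,
  fun h _ _ _ hu x hx => (h.1 x).driftLaplacian_comp_eq_zero hφ.contDiffAt (h.2 x) (hu _ hx)⟩

theorem isHarmonicMorphism_iff (hφ : ContDiff ℝ 2 φ) :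
    IsHarmonicMorphism φ ↔ (∀ x, IsHorizontallyWeaklyConformalAt φ x) ∧ ∀ x, Δ φ x = 0 := by
  rw [isHarmonicMorphism_iff_isDriftHarmonicMorphism_one_zero,
    isDriftHarmonicMorphism_iff (by simp) hφ, driftLaplacian_one_zero]

end HarmonicMorphism

section PolynomialMap

variable {σ κ : Type*}

/-- The map between Euclidean spaces whose components are the polynomials `p α`. -/
noncomputable def polynomialMap (p : κ → MvPolynomial σ ℝ) (x : EuclideanSpace ℝ σ) :
    EuclideanSpace ℝ κ :=
  WithLp.toLp 2 fun α => eval x.ofLp (p α)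

theorem exists_eq_polynomialMap {φ : EuclideanSpace ℝ σ → EuclideanSpace ℝ κ}
    (hφ : ∀ α, ∃ p : MvPolynomial σ ℝ, ∀ x, φ x α = eval (fun i => x i) p) :
    ∃ p, φ = polynomialMap p := by
  choose p hp using hφ
  refine ⟨p, ?_⟩
  ext x α
  exact hp α x

variable [Fintype σ]

theorem contDiff_eval {k : WithTop ℕ∞} (p : MvPolynomial σ ℝ) :
    ContDiff ℝ k fun x : EuclideanSpace ℝ σ => eval x.ofLp p :=
  (AnalyticOnNhd.eval_mvPolynomial p).contDiff.comp PiLp.contDiff_ofLp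

theorem fderiv_eval_apply (p : MvPolynomial σ ℝ) (x v : EuclideanSpace ℝ σ) :
    fderiv ℝ (fun y : EuclideanSpace ℝ σ => eval y.ofLp p) x v =
      ∑ i, eval x.ofLp (pderiv i p) * v i := by
  classical
  have differentiable (q : MvPolynomial σ ℝ) :
      DifferentiableAt ℝ (fun y : EuclideanSpace ℝ σ => eval y.ofLp q) x :=
    (contDiff_eval q).differentiable one_ne_zero x
  induction p using MvPolynomial.induction_on with
  | C a => simp
  | add p q hp hq =>
    simp only [map_add, add_mul, Finset.sum_add_distrib]
    rw [fderiv_fun_add (differentiable p) (differentiable q), add_apply, hp, hq]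
  | mul_X p j hp =>
    have coordinate : fderiv ℝ (fun y : EuclideanSpace ℝ σ => eval y.ofLp (X j)) x =
        EuclideanSpace.proj j := by
      simp only [eval_X]
      exact (EuclideanSpace.proj (𝕜 := ℝ) j).fderiv
    simp only [map_mul]
    rw [fderiv_fun_mul (differentiable p) (differentiable (X j)), coordinate]
    simp [hp, Pi.single_apply, pderiv_X, apply_ite, add_mul, Finset.sum_add_distrib,
      Finset.mul_sum, mul_assoc]

theorem laplacian_eval (p : MvPolynomial σ ℝ) (x : EuclideanSpace ℝ σ) :
    Δ (fun y : EuclideanSpace ℝ σ => eval y.ofLp p) x = eval x.ofLp (polyLaplacian p) := by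
  classical
  simp [laplacian_eq_sum_fderiv_fderiv (EuclideanSpace.basisFun σ ℝ),
    ← fderiv_fderiv_apply_const (contDiff_eval p).contDiffAt, fderiv_eval_apply,
    polyLaplacian_apply]

variable [Fintype κ] (p : κ → MvPolynomial σ ℝ)

theorem contDiff_polynomialMap {k : WithTop ℕ∞} : ContDiff ℝ k (polynomialMap p) :=
  contDiff_euclidean.2 fun α => contDiff_eval (p α)

theorem laplacian_polynomialMap_apply (x : EuclideanSpace ℝ σ) (α : κ) :
    Δ (polynomialMap p) x α = eval x.ofLp (polyLaplacian (p α)) := by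
  rw [← laplacian_eval]
  exact ((contDiff_polynomialMap p).contDiffAt.laplacian_CLM_comp_left
    (l := EuclideanSpace.proj (𝕜 := ℝ) α)).symm

theorem adjoint_fderiv_polynomialMap_single [DecidableEq κ] (x : EuclideanSpace ℝ σ) (α : κ) :
    (fderiv ℝ (polynomialMap p) x).toLinearMap.adjoint (EuclideanSpace.single α 1) =
      WithLp.toLp 2 fun i => eval x.ofLp (pderiv i (p α)) := by
  have component (v : EuclideanSpace ℝ σ) : fderiv ℝ (polynomialMap p) x v α =
      ∑ i, eval x.ofLp (pderiv i (p α)) * v i := by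
    have h := (EuclideanSpace.proj (𝕜 := ℝ) α).hasFDerivAt.comp x
      ((contDiff_polynomialMap p).differentiable one_ne_zero x).hasFDerivAt
    rw [← fderiv_eval_apply]
    exact (congrArg (· v) h.fderiv).symm
  refine ext_inner_right ℝ fun v => ?_
  simp [LinearMap.adjoint_inner_left, component, PiLp.inner_apply, mul_comm]

theorem inner_adjoint_fderiv_polynomialMap_single [DecidableEq κ] (x : EuclideanSpace ℝ σ)
    (α β : κ) :
    ⟪(fderiv ℝ (polynomialMap p) x).toLinearMap.adjoint (EuclideanSpace.single α 1),
      (fderiv ℝ (polynomialMap p) x).toLinearMap.adjoint (EuclideanSpace.single β 1)⟫ =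
      eval x.ofLp (gradDerivation (p α) (p β)) := by
  simp [adjoint_fderiv_polynomialMap_single, PiLp.inner_apply, gradDerivation_apply, mul_comm]

variable {p}

theorem laplacian_polynomialMap_eq_zero [Nontrivial κ]
    (h : ∀ x, IsHorizontallyWeaklyConformalAt (polynomialMap p) x) (x : EuclideanSpace ℝ σ) :
    Δ (polynomialMap p) x = 0 := by
  classical
  have orthogonal {α β : κ} (hαβ : α ≠ β) : gradDerivation (p α) (p β) = 0 := by
    refine MvPolynomial.funext fun a => ?_
    obtain ⟨c, hc⟩ := h (WithLp.toLp 2 a)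
    rw [← inner_adjoint_fderiv_polynomialMap_single p (WithLp.toLp 2 a), hc]
    simp [EuclideanSpace.inner_single_left, hαβ]
  have norm_eq (α β : κ) : gradDerivation (p α) (p α) = gradDerivation (p β) (p β) := by
    refine MvPolynomial.funext fun a => ?_
    obtain ⟨c, hc⟩ := h (WithLp.toLp 2 a)
    rw [← inner_adjoint_fderiv_polynomialMap_single p (WithLp.toLp 2 a),
      ← inner_adjoint_fderiv_polynomialMap_single p (WithLp.toLp 2 a), hc, hc]
    simp
  ext α
  obtain ⟨β, hβ⟩ := exists_ne α
  rw [laplacian_polynomialMap_apply,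
    polyLaplacian_eq_zero_of_semiconformal (orthogonal hβ.symm) (norm_eq α β), map_zero,
    PiLp.zero_apply]

end PolynomialMap

section Lap

variable {m n : ℕ}

theorem lap_eq_laplacian {u : EuclideanSpace ℝ (Fin m) → ℝ} {x : EuclideanSpace ℝ (Fin m)}
    (hu : ContDiffAt ℝ 2 u x) : lap u x = Δ u x := by
  simp only [lap, laplacian_eq_sum_fderiv_fderiv (EuclideanSpace.basisFun (Fin m) ℝ),
    EuclideanSpace.basisFun_apply, fderiv_fderiv_apply_const hu]

theorem harmonicOnNhd_iff_lap {V : Set (EuclideanSpace ℝ (Fin m))} (hV : IsOpen V)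
    {u : EuclideanSpace ℝ (Fin m) → ℝ} :
    HarmonicOnNhd u V ↔ ContDiffOn ℝ 2 u V ∧ ∀ y ∈ V, lap u y = 0 := by
  constructor
  · intro h
    refine ⟨fun y hy => (h y hy).1.contDiffWithinAt, fun y hy => ?_⟩
    rw [lap_eq_laplacian (h y hy).1, (h y hy).2.self_of_nhds, Pi.zero_apply]
  · rintro ⟨hu, harmonic⟩ y hy
    refine ⟨hu.contDiffAt (hV.mem_nhds hy), ?_⟩
    filter_upwards [hV.mem_nhds hy] with z hz
    rw [← lap_eq_laplacian (hu.contDiffAt (hV.mem_nhds hz)), harmonic z hz, Pi.zero_apply]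

variable {φ : EuclideanSpace ℝ (Fin m) → EuclideanSpace ℝ (Fin n)}

theorem isDriftHarmonicMorphism_iff_lap {f : EuclideanSpace ℝ (Fin m) → ℝ}
    {X : EuclideanSpace ℝ (Fin m) → EuclideanSpace ℝ (Fin m)} (hφ : ContDiff ℝ 2 φ) :
    IsDriftHarmonicMorphism f X φ ↔
      ∀ V : Set (EuclideanSpace ℝ (Fin n)), IsOpen V →
        ∀ u : EuclideanSpace ℝ (Fin n) → ℝ, ContDiffOn ℝ 2 u V →
        (∀ y ∈ V, lap u y = 0) →
        (φ ⁻¹' V).Nonempty →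
        ∀ x ∈ φ ⁻¹' V,
          f x * lap (fun y => u (φ y)) x + ⟪X x, gradient (fun y => u (φ y)) x⟫ = 0 := by
  have operator_eq {u : EuclideanSpace ℝ (Fin n) → ℝ} {x : EuclideanSpace ℝ (Fin m)}
      (hu : ContDiffAt ℝ 2 u (φ x)) : driftLaplacian f X (u ∘ φ) x =
        f x * lap (fun y => u (φ y)) x + ⟪X x, gradient (fun y => u (φ y)) x⟫ := by
    have hcomp : ContDiffAt ℝ 2 (fun y => u (φ y)) x := hu.comp x hφ.contDiffAt
    rw [lap_eq_laplacian hcomp, inner_gradient_right, conj_trivial]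
    rfl
  constructor
  · intro h V hV u hu harmonic _ x hx
    rw [← operator_eq (hu.contDiffAt (hV.mem_nhds hx))]
    exact h V hV u ((harmonicOnNhd_iff_lap hV).2 ⟨hu, harmonic⟩) x hx
  · intro h V hV u hu x hx
    obtain ⟨smooth, harmonic⟩ := (harmonicOnNhd_iff_lap hV).1 hu
    rw [operator_eq (hu _ hx).1]
    exact h V hV u smooth harmonic ⟨x, hx⟩ x hx

theorem isHarmonicMorphism_iff_lap (hφ : ContDiff ℝ 2 φ) :
    IsHarmonicMorphism φ ↔
      ∀ V : Set (EuclideanSpace ℝ (Fin n)), IsOpen V →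
        ∀ u : EuclideanSpace ℝ (Fin n) → ℝ, ContDiffOn ℝ 2 u V →
        (∀ y ∈ V, lap u y = 0) →
        (φ ⁻¹' V).Nonempty →
        ∀ x ∈ φ ⁻¹' V, lap (fun y => u (φ y)) x = 0 := by
  simpa using isHarmonicMorphism_iff_isDriftHarmonicMorphism_one_zero.trans
    (isDriftHarmonicMorphism_iff_lap hφ)

end Lap

theorem stmt10_general {σ κ : Type*} [Fintype σ] [Fintype κ] [Nontrivial κ]
    {f : EuclideanSpace ℝ σ → ℝ} (hf : ∀ x, f x ≠ 0)
    (X : EuclideanSpace ℝ σ → EuclideanSpace ℝ σ) {φ : EuclideanSpace ℝ σ → EuclideanSpace ℝ κ}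
    (hpoly : ∀ α, ∃ p : MvPolynomial σ ℝ, ∀ x, φ x α = eval (fun i => x i) p) :
    IsDriftHarmonicMorphism f X φ ↔ IsHarmonicMorphism φ ∧ ∀ x, fderiv ℝ φ x (X x) = 0 := by
  obtain ⟨p, rfl⟩ := exists_eq_polynomialMap hpoly
  have smooth : ContDiff ℝ 2 (polynomialMap p) := contDiff_polynomialMap p
  rw [isDriftHarmonicMorphism_iff hf smooth, isHarmonicMorphism_iff smooth, and_assoc,
    and_congr_right_iff]
  intro conformal
  have harmonic := laplacian_polynomialMap_eq_zero conformal
  simp only [driftLaplacian, harmonic, smul_zero, zero_add, implies_true, true_and]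

theorem stmt10 {m n : ℕ} (hn : 2 ≤ n) (hmn : n < m)
    (f : EuclideanSpace ℝ (Fin m) → ℝ) (hf : ContDiff ℝ (⊤ : ℕ∞) f)
    (hfpos : ∀ x, 0 < f x)
    (φ : EuclideanSpace ℝ (Fin m) → EuclideanSpace ℝ (Fin n))
    -- each component of `φ` is a polynomial
    (hpoly : ∀ α : Fin n, ∃ p : MvPolynomial (Fin m) ℝ,
      ∀ x, φ x α = MvPolynomial.eval (fun i => x i) p) :
    -- `φ` is an `f`-harmonic morphism ...
    (∀ V : Set (EuclideanSpace ℝ (Fin n)), IsOpen V →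
      ∀ u : EuclideanSpace ℝ (Fin n) → ℝ, ContDiffOn ℝ 2 u V →
      (∀ y ∈ V, lap u y = 0) →
      (φ ⁻¹' V).Nonempty →
      ∀ x ∈ φ ⁻¹' V,
        f x * lap (fun y => u (φ y)) x +
          ⟪gradient f x, gradient (fun y => u (φ y)) x⟫ = 0) ↔
    -- ... iff `φ` is a harmonic morphism and the gradient of `f` is vertical
    ((∀ V : Set (EuclideanSpace ℝ (Fin n)), IsOpen V →
      ∀ u : EuclideanSpace ℝ (Fin n) → ℝ, ContDiffOn ℝ 2 u V →
      (∀ y ∈ V, lap u y = 0) →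
      (φ ⁻¹' V).Nonempty →
      ∀ x ∈ φ ⁻¹' V, lap (fun y => u (φ y)) x = 0) ∧
      ∀ x, fderiv ℝ φ x (gradient f x) = 0) := by
  have : Nontrivial (Fin n) := Fin.nontrivial_iff_two_le.2 hn
  have hφ : ContDiff ℝ 2 φ :=
    let ⟨p, hp⟩ := exists_eq_polynomialMap hpoly
    hp ▸ contDiff_polynomialMap p
  rw [← isDriftHarmonicMorphism_iff_lap hφ, ← isHarmonicMorphism_iff_lap hφ]
  exact stmt10_general (fun x => (hfpos x).ne') (gradient f) hpoly
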